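/- Let n, k be natural numbers and let E be an arbitrary set of k-regulous functions on ℝⁿ. Then there exists a single k-regulous function f : ℝⁿ → ℝ such that ⋂_{g ∈ E} Z(g) = Z(f). -/

import Mathlib

open MvPolynomial

/-- A function `f : ℝⁿ → ℝ` is `k`-regulous if it is of class `C^k` on all of `ℝⁿ` and
agrees with a rational function: there are polynomials `p`, `q` with `q ≠ 0` and
`q(x) * f(x) = p(x)` for every `x`. -/
def IsRegulous (n k : ℕ) (f : (Fin n → ℝ) → ℝ) : Prop :=
  ContDiff ℝ k f ∧ ∃ p q : MvPolynomial (Fin n) ℝ, q ≠ 0 ∧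
    ∀ x : Fin n → ℝ, eval x q * f x = eval x p

/-!
The ring of polynomials is noetherian, so it suffices to show, by noetherian induction on an ideal
`I`, that finitely many members of `E` cut out the common zeros of `E` on the real zero locus
`V(I)`; the sum of the squares of these members is then the required function.

Only a prime `I` needs an idea. A regulous `g` satisfies a relation `b * g = a` on `V(I)` with
polynomials `a` and `b ∉ I`, although its denominator may vanish on `V(I)`: expand the numerator and
the denominator along parallel lines through the points of `V(I)` and use the first coefficients
that do not lie in `I`. If some `g` in `E` has `a ∉ I`, then its zeros on `V(I)` lie in the smaller
locus of `I + (a)`. Otherwise every `g` vanishes on `V(I)` off a locus `b = 0`, and by continuity at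
all points of `V(I)` that are limits of points where `b ≠ 0`. This covers all points of `V(I)` off a
single locus `c = 0` with `c ∉ I`, the same for all `b ∉ I`. To find `c`, adjoin generators one at
a time: a transcendental generator can be moved freely, and an algebraic one is a root of its
minimal relation, which persists under small perturbations where the derivative does not vanish.
-/

open scoped Polynomial Topology

section RealPoints

/-- The space of real points of a commutative ring. For `A = ℝ[X₁, …, Xₙ] ⧸ I` it is the real
zero locus of `I`, and the topology of pointwise convergence is the Euclidean one. -/
abbrev RealPoint (A : Type*) [CommRing A] := A →+* ℝ

namespace RealPoint

variable {A B : Type*} [CommRing A] [CommRing B]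

instance : TopologicalSpace (RealPoint A) := .induced (fun φ a ↦ φ a) inferInstance

theorem continuous_eval (a : A) : Continuous fun φ : RealPoint A ↦ φ a :=
  (continuous_apply a).comp continuous_induced_dom

theorem continuous_comp (f : A →+* B) : Continuous fun φ : RealPoint B ↦ φ.comp f :=
  continuous_induced_rng.2 <| continuous_pi fun a ↦ continuous_eval (f a)

theorem continuous_eval₂ (P : A[X]) :
    Continuous fun p : RealPoint A × ℝ ↦ P.eval₂ p.1 p.2 := by
  simp only [Polynomial.eval₂_eq_sum, Polynomial.sum_def]
  exact continuous_finsetSum _ fun i _ ↦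
    ((continuous_eval _).comp continuous_fst).mul (continuous_snd.pow i)

end RealPoint

end RealPoints

section SimpleRoots

theorem eventually_exists_eq_zero_of_deriv_pos {Y : Type*} [TopologicalSpace Y] {f : Y → ℝ → ℝ}
    {y : Y} {s : ℝ} (hfs : ∀ z, Continuous (f z)) (hfy : ∀ t, Continuous (f · t))
    (hs : f y s = 0) (hf' : 0 < deriv (f y) s) {T : Set ℝ} (hT : T ∈ 𝓝 s) :
    ∀ᶠ z in 𝓝 y, ∃ t ∈ T, f z t = 0 := by
  obtain ⟨l, u, ⟨hl, hu⟩, hlu⟩ := mem_nhds_iff_exists_Ioo_subset.1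
    (Filter.inter_mem hT (eventually_nhdsWithin_sign_eq_of_deriv_pos hf' hs))
  obtain ⟨a, hla, has⟩ := exists_between hl
  obtain ⟨b, hsb, hbu⟩ := exists_between hu
  have ha : f y a < 0 := by
    have := (hlu ⟨hla, has.trans hu⟩).2
    rwa [Set.mem_ofPred_eq, sign_neg (sub_neg.2 has), sign_eq_neg_one_iff] at this
  have hb : 0 < f y b := by
    have := (hlu ⟨hl.trans hsb, hbu⟩).2
    rwa [Set.mem_ofPred_eq, sign_pos (sub_pos.2 hsb), sign_eq_one_iff] at this
  filter_upwards [(hfy a).continuousAt.eventually_lt continuousAt_const ha,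
    continuousAt_const.eventually_lt (hfy b).continuousAt hb] with z hza hzb
  obtain ⟨t, ht, hzt⟩ :=
    intermediate_value_Icc (has.trans hsb).le (hfs z).continuousOn ⟨hza.le, hzb.le⟩
  exact ⟨t, (hlu ⟨hla.trans_le ht.1, ht.2.trans_lt hbu⟩).1, hzt⟩

theorem eventually_exists_eq_zero_of_deriv_ne_zero {Y : Type*} [TopologicalSpace Y]
    {f : Y → ℝ → ℝ} {y : Y} {s : ℝ} (hfs : ∀ z, Continuous (f z)) (hfy : ∀ t, Continuous (f · t))
    (hs : f y s = 0) (hf' : deriv (f y) s ≠ 0) {T : Set ℝ} (hT : T ∈ 𝓝 s) :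
    ∀ᶠ z in 𝓝 y, ∃ t ∈ T, f z t = 0 := by
  rcases hf'.lt_or_gt with hneg | hpos
  · simpa using eventually_exists_eq_zero_of_deriv_pos (f := fun z t ↦ -f z t)
      (fun z ↦ (hfs z).neg) (fun t ↦ (hfy t).neg) (by simpa) (by simpa [deriv.fun_neg]) hT
  · exact eventually_exists_eq_zero_of_deriv_pos hfs hfy hs hpos hT

theorem RealPoint.eventually_exists_root_mem {A : Type*} [CommRing A] (P : A[X]) {φ : RealPoint A}
    {s : ℝ} (hs : P.eval₂ φ s = 0) (hs' : P.derivative.eval₂ φ s ≠ 0) {T : Set ℝ}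
    (hT : T ∈ 𝓝 s) : ∀ᶠ ψ in 𝓝 φ, ∃ t ∈ T, P.eval₂ ψ t = 0 := by
  refine eventually_exists_eq_zero_of_deriv_ne_zero (f := fun (ψ : RealPoint A) t ↦ P.eval₂ ψ t)
    (fun ψ ↦ (continuous_eval₂ P).comp (by fun_prop : Continuous fun t : ℝ ↦ (ψ, t)))
    (fun t ↦ (continuous_eval₂ P).comp (continuous_id.prodMk continuous_const)) hs ?_ hT
  simpa only [← Polynomial.eval_map, Polynomial.deriv, Polynomial.derivative_map] using hs'

end SimpleRoots

section MinimalRelation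

theorem exists_leadingCoeff_pow_mul_eq_mul {D : Type*} [CommRing D] {J : Ideal D[X]} {P : D[X]}
    (hPJ : P ∈ J) (hP : 0 < P.natDegree) (hmin : ∀ F ∈ J, F ≠ 0 → P.natDegree ≤ F.natDegree)
    {F : D[X]} (hF : F ∈ J) :
    ∃ (N : ℕ) (Q : D[X]), Polynomial.C (P.leadingCoeff ^ N) * F = Q * P := by
  induction hd : F.natDegree using Nat.strong_induction_on generalizing F with
  | _ d ih =>
    subst hd
    obtain rfl | hF0 := eq_or_ne F 0
    · exact ⟨0, 0, by simp⟩
    have hle := hmin F hF hF0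
    have hG : P.cancelLeads F ∈ J := J.sub_mem (J.mul_mem_left _ hF) (J.mul_mem_left _ hPJ)
    obtain ⟨N, Q, hQ⟩ := ih _
      (Polynomial.natDegree_cancelLeads_lt_of_natDegree_le_natDegree hle (hP.trans_le hle)) hG rfl
    refine ⟨N + 1, Q + Polynomial.C (P.leadingCoeff ^ N) *
      (Polynomial.C F.leadingCoeff * Polynomial.X ^ (F.natDegree - P.natDegree)), ?_⟩
    rw [add_mul, ← hQ, Polynomial.cancelLeads, Nat.sub_eq_zero_of_le hle, pow_succ,
      Polynomial.C_mul]
    ring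

variable {D A : Type*} [CommRing D] [CommRing A] [Algebra D A]

theorem exists_minimal_relation_of_isAlgebraic [CharZero D] [IsDomain D] [FaithfulSMul D A] {θ : A}
    (hθ : IsAlgebraic D θ) :
    ∃ P : D[X], P ≠ 0 ∧ Polynomial.aeval θ P = 0 ∧ Polynomial.aeval θ P.derivative ≠ 0 ∧
      ∀ F : D[X], Polynomial.aeval θ F = 0 →
        ∃ (N : ℕ) (Q : D[X]), Polynomial.C (P.leadingCoeff ^ N) * F = Q * P := by
  obtain ⟨P, ⟨hP0, hPθ⟩, hPmin⟩ := exists_minimalFor_of_wellFoundedLT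
    (fun F : D[X] ↦ F ≠ 0 ∧ Polynomial.aeval θ F = 0) Polynomial.natDegree hθ
  have hmin (F : D[X]) (hFθ : Polynomial.aeval θ F = 0) (hF0 : F ≠ 0) :
      P.natDegree ≤ F.natDegree :=
    (le_total _ _).elim id (hPmin ⟨hF0, hFθ⟩)
  have hdeg : 0 < P.natDegree := by
    refine Nat.pos_of_ne_zero fun h ↦ hP0 ?_
    rw [Polynomial.eq_C_of_natDegree_eq_zero h, Polynomial.aeval_C,
      FaithfulSMul.algebraMap_eq_zero_iff] at hPθ
    rw [Polynomial.eq_C_of_natDegree_eq_zero h, hPθ, Polynomial.C_0]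
  refine ⟨P, hP0, hPθ, fun h ↦ ?_, fun F hF ↦ exists_leadingCoeff_pow_mul_eq_mul
    (J := RingHom.ker (Polynomial.aeval θ : D[X] →ₐ[D] A)) hPθ hdeg hmin hF⟩
  exact (Polynomial.natDegree_derivative_lt hdeg.ne').not_ge
    (hmin _ h fun h0 ↦ hdeg.ne' (Polynomial.derivative_eq_zero.1 h0))

end MinimalRelation

section Adjoin

variable {D A : Type*} [CommRing D] [CommRing A] [Algebra D A] {θ : A}

theorem aeval_surjective_of_adjoin_singleton_eq_top (hθ : Algebra.adjoin D {θ} = ⊤) :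
    Function.Surjective (Polynomial.aeval θ : D[X] →ₐ[D] A) := by
  rwa [← AlgHom.range_eq_top, ← Algebra.adjoin_singleton_eq_range_aeval]

namespace RealPoint

theorem apply_aeval (φ : RealPoint A) (F : D[X]) :
    φ (Polynomial.aeval θ F) = F.eval₂ (φ.comp (algebraMap D A)) (φ θ) := by
  rw [Polynomial.aeval_def, Polynomial.hom_eval₂]

theorem isInducing_comp_prodMk (hθ : Algebra.adjoin D {θ} = ⊤) :
    Topology.IsInducing fun φ : RealPoint A ↦
      ((φ.comp (algebraMap D A), φ θ) : RealPoint D × ℝ) := by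
  choose F hF using aeval_surjective_of_adjoin_singleton_eq_top hθ
  refine .of_comp (g := fun p a ↦ (F a).eval₂ p.1 p.2)
    ((continuous_comp _).prodMk (continuous_eval θ))
    (continuous_pi fun a ↦ continuous_eval₂ (F a)) ⟨?_⟩
  simp only [Function.comp_def, ← apply_aeval, hF]
  rfl

theorem frequently_nhds_of_adjoin (hθ : Algebra.adjoin D {θ} = ⊤) {φ : RealPoint A}
    {p : RealPoint A → Prop}
    (h : ∀ U ∈ 𝓝 (φ.comp (algebraMap D A) : RealPoint D), ∀ T ∈ 𝓝 (φ θ),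
      ∃ χ : RealPoint A, χ.comp (algebraMap D A) ∈ U ∧ χ θ ∈ T ∧ p χ) :
    ∃ᶠ χ in 𝓝 φ, p χ := by
  rw [(isInducing_comp_prodMk hθ).nhds_eq_comap, nhds_prod_eq]
  refine Filter.frequently_comap.2 <| Filter.frequently_iff.2 fun {V} hV ↦ ?_
  obtain ⟨U, hU, T, hT, hUT⟩ := Filter.mem_prod_iff.1 hV
  obtain ⟨χ, hχU, hχT, hχ⟩ := h U hU T hT
  exact ⟨_, hUT ⟨hχU, hχT⟩, χ, rfl, hχ⟩

theorem exists_extension (hθ : Algebra.adjoin D {θ} = ⊤) (ψ : RealPoint D) (t : ℝ)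
    (h : ∀ F : D[X], Polynomial.aeval θ F = 0 → F.eval₂ ψ t = 0) :
    ∃ χ : RealPoint A, χ.comp (algebraMap D A) = ψ ∧ χ θ = t := by
  let χ : RealPoint A := (Polynomial.aeval θ : D[X] →ₐ[D] A).toRingHom.liftOfSurjective
    (aeval_surjective_of_adjoin_singleton_eq_top hθ) ⟨Polynomial.eval₂RingHom ψ t, h⟩
  have hχ (F : D[X]) : χ (Polynomial.aeval θ F) = F.eval₂ ψ t :=
    RingHom.liftOfSurjective_comp_apply _ _ _ F
  refine ⟨χ, RingHom.ext fun d ↦ ?_, ?_⟩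
  · simpa using hχ (Polynomial.C d)
  · simpa using hχ Polynomial.X

end RealPoint

end Adjoin

section GenericallyCentral

/-- Outside some locus `c = 0` with `c ≠ 0`, every real point of `A` is central: it is a limit of
real points off any given locus `b = 0` with `b ≠ 0`. The condition is vacuous if `A` has no real
points. -/
def IsGenericallyCentral (A : Type*) [CommRing A] : Prop :=
  ∃ c : A, c ≠ 0 ∧ ∀ φ : RealPoint A, φ c ≠ 0 → ∀ b : A, b ≠ 0 → ∃ᶠ χ in 𝓝 φ, χ b ≠ 0

namespace IsGenericallyCentral

theorem of_isField {K : Type*} [CommRing K] (hK : IsField K) : IsGenericallyCentral K := by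
  let := hK.toField
  exact ⟨1, one_ne_zero, fun _ _ _ hb ↦ (Filter.Eventually.of_forall fun χ ↦
    (map_ne_zero (χ : K →+* ℝ)).2 hb).frequently⟩

theorem of_ringEquiv {A B : Type*} [CommRing A] [CommRing B] (e : A ≃+* B)
    (hA : IsGenericallyCentral A) : IsGenericallyCentral B := by
  obtain ⟨c, hc, h⟩ := hA
  refine ⟨e c, by simpa, fun φ hφ b hb ↦ ?_⟩
  have hfreq := h (φ.comp e.toRingHom) hφ (e.symm b) (by simpa)
  have htend := (RealPoint.continuous_comp e.symm.toRingHom).tendsto (φ.comp e.toRingHom)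
  have hφe : (φ.comp e.toRingHom).comp e.symm.toRingHom = φ := RingHom.ext fun b ↦ by simp
  rw [hφe] at htend
  exact htend.frequently hfreq

variable {D A : Type*} [CommRing D] [CommRing A] [Algebra D A] {θ : A}

theorem of_adjoin_transcendental (hD : IsGenericallyCentral D) (hθ : Algebra.adjoin D {θ} = ⊤)
    (hθt : Transcendental D θ) : IsGenericallyCentral A := by
  have hinj := transcendental_iff_injective.1 hθt
  obtain ⟨c, hc, hcD⟩ := hD
  refine ⟨algebraMap D A c, fun h ↦ hc ?_, fun φ hφ b hb ↦ ?_⟩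
  · simpa using hinj (a₁ := Polynomial.C c) (a₂ := 0) (by simpa using h)
  obtain ⟨F, rfl⟩ := aeval_surjective_of_adjoin_singleton_eq_top hθ b
  have hF : F ≠ 0 := by rintro rfl; simp at hb
  have hlead : F.leadingCoeff ≠ 0 := by simpa
  refine RealPoint.frequently_nhds_of_adjoin hθ fun U hU T hT ↦ ?_
  obtain ⟨ψ, hψ, hψU⟩ := ((hcD _ hφ _ hlead).and_eventually hU).exists
  have hFψ : F.map ψ ≠ 0 := fun h ↦ hψ <| by
    rw [Polynomial.leadingCoeff, ← Polynomial.coeff_map, h, Polynomial.coeff_zero]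
  obtain ⟨t, ht, htT⟩ :=
    ((Polynomial.rootSet_finite (F.map ψ) ℝ).countable.dense_compl ℝ).inter_nhds_nonempty hT
  obtain ⟨χ, rfl, rfl⟩ := RealPoint.exists_extension hθ ψ t fun G hG ↦ by
    simp [(injective_iff_map_eq_zero _).1 hinj G hG]
  refine ⟨χ, hψU, htT, ?_⟩
  rw [RealPoint.apply_aeval]
  simpa [Polynomial.mem_rootSet, hFψ, Polynomial.eval_map] using ht

theorem of_adjoin_algebraic [IsDomain A] [FaithfulSMul D A] (hD : IsGenericallyCentral D)
    (hθ : Algebra.adjoin D {θ} = ⊤) (hθa : IsAlgebraic D θ) : IsGenericallyCentral A := by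
  obtain hA | ⟨⟨φ₀⟩⟩ := isEmpty_or_nonempty (RealPoint A)
  · exact ⟨1, one_ne_zero, fun φ ↦ hA.elim φ⟩
  have : CharZero D := (φ₀.comp (algebraMap D A)).charZero
  have : IsDomain D := (FaithfulSMul.algebraMap_injective D A).isDomain _
  obtain ⟨P, hP, hPθ, hP'θ, hdiv⟩ := exists_minimal_relation_of_isAlgebraic hθa
  obtain ⟨c, hc, hcD⟩ := hD
  refine ⟨algebraMap D A c * Polynomial.aeval θ P.derivative, mul_ne_zero (by simpa) hP'θ,
    fun φ hφ b hb ↦ RealPoint.frequently_nhds_of_adjoin hθ fun U hU T hT ↦ ?_⟩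
  rw [map_mul, RealPoint.apply_aeval] at hφ
  have hba : IsAlgebraic D b :=
    Algebra.isAlgebraic_adjoin_singleton_iff.2 hθa b (hθ ▸ Algebra.mem_top)
  obtain ⟨a, ha, hba⟩ := hba.exists_nonzero_dvd (mem_nonZeroDivisors_of_ne_zero hb)
  have hroot := RealPoint.eventually_exists_root_mem P
    (by rw [← RealPoint.apply_aeval, hPθ, map_zero]) (right_ne_zero_of_mul hφ) hT
  have hla : P.leadingCoeff * a ≠ 0 := mul_ne_zero (by simpa) ha
  obtain ⟨ψ, ⟨hψ, hψU⟩, t, htT, hPt⟩ :=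
    (((hcD _ (left_ne_zero_of_mul hφ) _ hla).and_eventually hU).and_eventually hroot).exists
  rw [map_mul] at hψ
  obtain ⟨χ, rfl, rfl⟩ := RealPoint.exists_extension hθ ψ t fun F hF ↦ by
    obtain ⟨N, Q, hQ⟩ := hdiv F hF
    have hF := congrArg (Polynomial.eval₂ ψ t) hQ
    rw [Polynomial.eval₂_mul, Polynomial.eval₂_mul, hPt, mul_zero, Polynomial.eval₂_C,
      map_pow] at hF
    exact (mul_eq_zero.1 hF).resolve_left (pow_ne_zero _ (left_ne_zero_of_mul hψ))
  exact ⟨χ, hψU, htT, ne_zero_of_dvd_ne_zero (right_ne_zero_of_mul hψ) (map_dvd χ hba)⟩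

theorem of_adjoin_singleton [IsDomain A] [FaithfulSMul D A] (hD : IsGenericallyCentral D)
    (hθ : Algebra.adjoin D {θ} = ⊤) : IsGenericallyCentral A :=
  (em (IsAlgebraic D θ)).elim (hD.of_adjoin_algebraic hθ) (hD.of_adjoin_transcendental hθ)

theorem adjoin_singleton {B : Type*} [CommRing B] [IsDomain B] [Algebra D B] [FaithfulSMul D B]
    (hD : IsGenericallyCentral D) (x : B) : IsGenericallyCentral (Algebra.adjoin D {x}) := by
  have : FaithfulSMul D (Algebra.adjoin D {x}) := .tower_bot D _ B
  refine hD.of_adjoin_singleton (θ := ⟨x, Algebra.subset_adjoin rfl⟩) ?_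
  rw [← Algebra.adjoin_adjoin_coe_preimage]
  congr 1
  ext y
  simp [Subtype.ext_iff]

theorem of_finiteType (K A : Type*) [Field K] [CommRing A] [IsDomain A] [Algebra K A]
    [Algebra.FiniteType K A] : IsGenericallyCentral A := by
  classical
  have hadjoin (s : Finset A) : IsGenericallyCentral (Algebra.adjoin K (s : Set A)) := by
    induction s using Finset.induction_on with
    | empty =>
      rw [Finset.coe_empty, Algebra.adjoin_empty]
      exact .of_ringEquiv (Algebra.botEquiv K A).symm.toRingEquiv (.of_isField (Field.toIsField K))
    | insert x s _ ih =>
      rw [Finset.coe_insert, ← Set.union_singleton, Algebra.adjoin_union_eq_adjoin_adjoin]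
      exact ih.adjoin_singleton x
  obtain ⟨s, hs⟩ := Algebra.FiniteType.out (R := K) (A := A)
  have := hadjoin s
  rw [hs] at this
  exact this.of_ringEquiv Subalgebra.topEquiv.toRingEquiv

end IsGenericallyCentral

end GenericallyCentral

section ZeroLocus

variable {σ : Type*}

theorem mem_zeroLocus_iff_forall_eval {K : Type*} [Field K] {I : Ideal (MvPolynomial σ K)}
    {v : σ → K} : v ∈ zeroLocus K I ↔ ∀ p ∈ I, eval v p = 0 := by
  simp only [mem_zeroLocus_iff, aeval_eq_eval]

theorem zeroLocus_sup_span_singleton {K : Type*} [Field K] (I : Ideal (MvPolynomial σ K))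
    (a : MvPolynomial σ K) :
    zeroLocus K (I ⊔ Ideal.span {a}) = zeroLocus K I ∩ {v | eval v a = 0} := by
  rw [(zeroLocus_vanishingIdeal_galoisConnection (k := K) (K := K)).l_sup, zeroLocus_span]
  simp only [Set.mem_singleton_iff, forall_eq, aeval_eq_eval]
  rfl

theorem eval_realPoint_comp_mk_X {I : Ideal (MvPolynomial σ ℝ)}
    (χ : RealPoint (MvPolynomial σ ℝ ⧸ I)) :
    eval (fun i ↦ χ (Ideal.Quotient.mk I (X i))) = χ.comp (Ideal.Quotient.mk I) :=
  ringHom_ext' (Subsingleton.elim _ _) fun i ↦ eval_X i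

theorem exists_notMem_forall_mem_closure_zeroLocus [Finite σ] (I : Ideal (MvPolynomial σ ℝ))
    [I.IsPrime] :
    ∃ c ∉ I, ∀ v ∈ zeroLocus ℝ I, eval v c ≠ 0 → ∀ b ∉ I,
      v ∈ closure (zeroLocus ℝ I ∩ {x | eval x b ≠ 0}) := by
  obtain ⟨c', hc', h⟩ := IsGenericallyCentral.of_finiteType ℝ (MvPolynomial σ ℝ ⧸ I)
  obtain ⟨c, rfl⟩ := Ideal.Quotient.mk_surjective c'
  refine ⟨c, fun hc ↦ hc' (Ideal.Quotient.eq_zero_iff_mem.2 hc), fun v hv hcv b hb ↦ ?_⟩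
  let φ : RealPoint (MvPolynomial σ ℝ ⧸ I) :=
    Ideal.Quotient.lift I (eval v) (mem_zeroLocus_iff_forall_eval.1 hv)
  have hfreq := h φ hcv _ (Ideal.Quotient.eq_zero_iff_mem.not.2 hb)
  have hcont : Continuous fun (χ : RealPoint (MvPolynomial σ ℝ ⧸ I)) i ↦
      χ (Ideal.Quotient.mk I (X i)) := continuous_pi fun i ↦ RealPoint.continuous_eval _
  have hφv : (fun i ↦ φ (Ideal.Quotient.mk I (X i))) = v := funext fun i ↦ eval_X i
  rw [mem_closure_iff_frequently, ← hφv]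
  refine (hcont.tendsto φ).frequently (hfreq.mono fun χ hχ ↦ ⟨?_, ?_⟩)
  · refine mem_zeroLocus_iff_forall_eval.2 fun p hp ↦ ?_
    rw [eval_realPoint_comp_mk_X, RingHom.comp_apply, Ideal.Quotient.eq_zero_iff_mem.2 hp, map_zero]
  · simpa [eval_realPoint_comp_mk_X] using hχ

end ZeroLocus

section Restriction

theorem eval_divX_mul_of_continuous {𝕜 : Type*} [NontriviallyNormedField 𝕜] {g : 𝕜 → 𝕜}
    (hg : Continuous g) {P Q : 𝕜[X]} (h : ∀ t, Q.eval t * g t = P.eval t)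
    (hQ : Q.coeff 0 = 0) (t : 𝕜) : Q.divX.eval t * g t = P.divX.eval t := by
  have hP : P.coeff 0 = 0 := by
    rw [Polynomial.coeff_zero_eq_eval_zero, ← h, ← Polynomial.coeff_zero_eq_eval_zero, hQ, zero_mul]
  have hoff : Set.EqOn (fun t ↦ Q.divX.eval t * g t) (P.divX.eval ·) {0}ᶜ := fun t ht ↦ by
    have ht' := h t
    rw [← Q.divX_mul_X_add, ← P.divX_mul_X_add, hQ, hP] at ht'
    simp only [Polynomial.C_0, add_zero, Polynomial.eval_mul_X] at ht'
    exact mul_right_cancel₀ ht (by rw [← ht']; ring)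
  exact congrFun (Continuous.ext_on (dense_compl_singleton 0)
    (Q.divX.continuous.mul hg) P.divX.continuous hoff) t

theorem coeff_mul_apply_zero_of_continuous {𝕜 : Type*} [NontriviallyNormedField 𝕜] {g : 𝕜 → 𝕜}
    (hg : Continuous g) {P Q : 𝕜[X]} (h : ∀ t, Q.eval t * g t = P.eval t) {j : ℕ}
    (hj : ∀ i < j, Q.coeff i = 0) : Q.coeff j * g 0 = P.coeff j := by
  induction j generalizing P Q with
  | zero => simpa only [Polynomial.coeff_zero_eq_eval_zero] using h 0
  | succ j ih =>
    simpa only [Polynomial.coeff_divX] using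
      ih (eval_divX_mul_of_continuous hg h (hj 0 j.succ_pos))
        fun i hi ↦ Polynomial.coeff_divX.trans (hj (i + 1) (Nat.succ_lt_succ hi))

variable {σ : Type*}

/-- The Taylor expansion of a polynomial `p` in the direction `w`: the polynomial `p (x + t w)` in
the variable `t`, with coefficients in the ring of polynomials in `x`. -/
noncomputable def lineExpansion {R : Type*} [CommSemiring R] (w : σ → R) :
    MvPolynomial σ R →ₐ[R] (MvPolynomial σ R)[X] :=
  aeval fun i ↦ Polynomial.C (X i) + Polynomial.C (C (w i)) * Polynomial.X

theorem eval_map_lineExpansion {R : Type*} [CommSemiring R] (w v : σ → R) (p : MvPolynomial σ R)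
    (t : R) : ((lineExpansion w p).map (eval v)).eval t = eval (v + t • w) p := by
  induction p using MvPolynomial.induction_on with
  | C r => simp [lineExpansion, Polynomial.algebraMap_apply, MvPolynomial.algebraMap_eq]
  | add p q hp hq => simp [hp, hq]
  | mul_X p i hp =>
    rw [map_mul, Polynomial.map_mul, Polynomial.eval_mul, hp]
    simp [lineExpansion, mul_comm t]

theorem exists_lineExpansion_coeff_notMem {K : Type*} [Field K] [Infinite K]
    {q : MvPolynomial σ K} (hq : q ≠ 0) {I : Ideal (MvPolynomial σ K)}
    (hI : (zeroLocus K I).Nonempty) : ∃ (w : σ → K) (j : ℕ), (lineExpansion w q).coeff j ∉ I := by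
  obtain ⟨v, hv⟩ := hI
  rw [mem_zeroLocus_iff_forall_eval] at hv
  obtain ⟨x, hx⟩ : ∃ x, eval x q ≠ 0 := by
    by_contra! h
    exact hq (MvPolynomial.funext fun x ↦ by simpa using h x)
  refine ⟨x - v, ?_⟩
  by_contra! hcoeff
  have hmap : (lineExpansion (x - v) q).map (eval v) = 0 :=
    Polynomial.ext fun j ↦ by rw [Polynomial.coeff_map, hv _ (hcoeff j), Polynomial.coeff_zero]
  have hline := eval_map_lineExpansion (x - v) v q 1
  rw [hmap, Polynomial.eval_zero, one_smul, add_sub_cancel] at hline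
  exact hx hline.symm

theorem exists_eval_mul_eq_on_zeroLocus {𝕜 : Type*} [NontriviallyNormedField 𝕜] {g : (σ → 𝕜) → 𝕜}
    (hg : Continuous g) {p q : MvPolynomial σ 𝕜} (hq : q ≠ 0) (hpq : ∀ x, eval x q * g x = eval x p)
    {I : Ideal (MvPolynomial σ 𝕜)} (hI : (zeroLocus 𝕜 I).Nonempty) :
    ∃ a b : MvPolynomial σ 𝕜, b ∉ I ∧ ∀ v ∈ zeroLocus 𝕜 I, eval v b * g v = eval v a := by
  classical
  obtain ⟨w, hw⟩ := exists_lineExpansion_coeff_notMem hq hI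
  refine ⟨(lineExpansion w p).coeff (Nat.find hw), (lineExpansion w q).coeff (Nat.find hw),
    Nat.find_spec hw, fun v hv ↦ ?_⟩
  have hline := coeff_mul_apply_zero_of_continuous (g := fun t : 𝕜 ↦ g (v + t • w))
    (P := (lineExpansion w p).map (eval v)) (Q := (lineExpansion w q).map (eval v))
    (hg.comp (by fun_prop)) (fun t ↦ by simp only [eval_map_lineExpansion, hpq])
    (j := Nat.find hw) fun i hi ↦ by
      rw [Polynomial.coeff_map]
      exact mem_zeroLocus_iff_forall_eval.1 hv _ (not_not.1 (Nat.find_min hw hi))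
  simpa only [Polynomial.coeff_map, zero_smul, add_zero] using hline

end Restriction

section FinitelyCut

variable {X M : Type*} [Zero M] {E : Set (X → M)} {V W : Set X}

/-- On `V`, the common zeros of the family `E` are already the common zeros of a finite
subfamily. -/
def IsFinitelyCutOn (E : Set (X → M)) (V : Set X) : Prop :=
  ∃ F ⊆ E, F.Finite ∧ ∀ x ∈ V, (∀ g ∈ F, g x = 0) → ∀ g ∈ E, g x = 0

namespace IsFinitelyCutOn

theorem of_forall_eq_zero (h : ∀ g ∈ E, ∀ x ∈ V, g x = 0) : IsFinitelyCutOn E V :=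
  ⟨∅, E.empty_subset, Set.finite_empty, fun x hx _ g hg ↦ h g hg x hx⟩

theorem mono (hW : IsFinitelyCutOn E W) (hVW : V ⊆ W) : IsFinitelyCutOn E V := by
  obtain ⟨F, hFE, hF, h⟩ := hW
  exact ⟨F, hFE, hF, fun x hx ↦ h x (hVW hx)⟩

theorem union (hV : IsFinitelyCutOn E V) (hW : IsFinitelyCutOn E W) :
    IsFinitelyCutOn E (V ∪ W) := by
  obtain ⟨F, hFE, hF, hFV⟩ := hV
  obtain ⟨G, hGE, hG, hGW⟩ := hW
  refine ⟨F ∪ G, Set.union_subset hFE hGE, hF.union hG, ?_⟩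
  rintro x (hx | hx) h
  · exact hFV x hx fun g hg ↦ h g (.inl hg)
  · exact hGW x hx fun g hg ↦ h g (.inr hg)

theorem of_inter_zeros {g : X → M} (hg : g ∈ E) (h : IsFinitelyCutOn E (V ∩ {x | g x = 0})) :
    IsFinitelyCutOn E V := by
  obtain ⟨F, hFE, hF, hFV⟩ := h
  refine ⟨insert g F, Set.insert_subset hg hFE, hF.insert g, fun x hx hzero ↦ ?_⟩
  exact hFV x ⟨hx, hzero g (.inl rfl)⟩ fun f hf ↦ hzero f (.inr hf)

end IsFinitelyCutOn
end FinitelyCut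

section Regulous

variable {n k : ℕ}

theorem exists_notMem_isRegulous_zeros_dichotomy (k : ℕ)
    (I : Ideal (MvPolynomial (Fin n) ℝ)) [I.IsPrime] :
    ∃ c ∉ I, ∀ g, IsRegulous n k g →
      (∃ a ∉ I, ∀ v ∈ zeroLocus ℝ I, g v = 0 → eval v a = 0) ∨
        ∀ v ∈ zeroLocus ℝ I, eval v c ≠ 0 → g v = 0 := by
  obtain ⟨c, hcI, hc⟩ := exists_notMem_forall_mem_closure_zeroLocus I
  refine ⟨c, hcI, fun g ⟨hg, p, q, hq, hpq⟩ ↦ ?_⟩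
  obtain hV | hV := (zeroLocus ℝ I).eq_empty_or_nonempty
  · simp [hV]
  obtain ⟨a, b, hb, hab⟩ := exists_eval_mul_eq_on_zeroLocus hg.continuous hq hpq hV
  refine (em' (a ∈ I)).imp (fun ha ↦ ⟨a, ha, fun v hv hgv ↦ ?_⟩) fun ha v hv hcv ↦ ?_
  · rw [← hab v hv, hgv, mul_zero]
  · have hgb : zeroLocus ℝ I ∩ {x | eval x b ≠ 0} ⊆ g ⁻¹' {0} := fun x ⟨hx, hbx⟩ ↦ by
      have habx := hab x hx
      rw [mem_zeroLocus_iff_forall_eval.1 hx a ha] at habx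
      exact (mul_eq_zero.1 habx).resolve_left hbx
    exact closure_minimal hgb (isClosed_singleton.preimage hg.continuous) (hc v hv hcv b hb)

theorem isFinitelyCutOn_zeroLocus {E : Set ((Fin n → ℝ) → ℝ)} (hE : ∀ g ∈ E, IsRegulous n k g)
    (I : Ideal (MvPolynomial (Fin n) ℝ)) : IsFinitelyCutOn E (zeroLocus ℝ I) := by
  induction I using WellFoundedGT.induction with
  | ind I ih =>
  have hcut (a) (ha : a ∉ I) : IsFinitelyCutOn E (zeroLocus ℝ I ∩ {v | eval v a = 0}) := by
    rw [← zeroLocus_sup_span_singleton]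
    exact ih _ (Submodule.lt_sup_iff_notMem.2 ha)
  by_cases hI : I.IsPrime
  · obtain ⟨c, hc, hdich⟩ := exists_notMem_isRegulous_zeros_dichotomy k I
    by_cases hex : ∃ g ∈ E, ∃ a ∉ I, ∀ v ∈ zeroLocus ℝ I, g v = 0 → eval v a = 0
    · obtain ⟨g, hg, a, ha, hga⟩ := hex
      exact .of_inter_zeros hg ((hcut a ha).mono fun v hv ↦ ⟨hv.1, hga v hv.1 hv.2⟩)
    · have hzero : IsFinitelyCutOn E (zeroLocus ℝ I ∩ {v | eval v c ≠ 0}) :=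
        .of_forall_eq_zero fun g hg v hv ↦
          (hdich g (hE g hg)).resolve_left (fun h ↦ hex ⟨g, hg, h⟩) v hv.1 hv.2
      exact ((hcut c hc).union hzero).mono fun v hv ↦
        (em (eval v c = 0)).imp (⟨hv, ·⟩) (⟨hv, ·⟩)
  · obtain rfl | ⟨a, ha, b, hb, hab⟩ := Ideal.not_isPrime_iff.1 hI
    · rw [zeroLocus_top]
      exact .of_forall_eq_zero fun _ _ _ hx ↦ hx.elim
    · refine ((hcut a ha).union (hcut b hb)).mono fun v hv ↦ ?_
      have habv := mem_zeroLocus_iff_forall_eval.1 hv _ hab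
      rw [map_mul] at habv
      exact (mul_eq_zero.1 habv).imp (⟨hv, ·⟩) (⟨hv, ·⟩)

theorem IsRegulous.zero (n k : ℕ) : IsRegulous n k fun _ ↦ 0 :=
  ⟨contDiff_const, 0, 1, one_ne_zero, by simp⟩

theorem IsRegulous.add {f g : (Fin n → ℝ) → ℝ} (hf : IsRegulous n k f) (hg : IsRegulous n k g) :
    IsRegulous n k fun x ↦ f x + g x := by
  obtain ⟨hf, p, q, hq, hpq⟩ := hf
  obtain ⟨hg, r, s, hs, hrs⟩ := hg
  refine ⟨hf.add hg, p * s + q * r, q * s, mul_ne_zero hq hs, fun x ↦ ?_⟩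
  simp only [map_mul, map_add, ← hpq, ← hrs]
  ring

theorem IsRegulous.pow {f : (Fin n → ℝ) → ℝ} (hf : IsRegulous n k f) (m : ℕ) :
    IsRegulous n k fun x ↦ f x ^ m := by
  obtain ⟨hf, p, q, hq, hpq⟩ := hf
  exact ⟨hf.pow m, p ^ m, q ^ m, pow_ne_zero m hq, fun x ↦ by simp only [map_pow, ← hpq, mul_pow]⟩

theorem IsRegulous.sum {ι : Type*} {s : Finset ι} {f : ι → (Fin n → ℝ) → ℝ}
    (hf : ∀ i ∈ s, IsRegulous n k (f i)) : IsRegulous n k fun x ↦ ∑ i ∈ s, f i x := by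
  classical
  induction s using Finset.induction_on with
  | empty => simpa using IsRegulous.zero n k
  | insert i s hi ih =>
    rw [Finset.forall_mem_insert] at hf
    simpa only [Finset.sum_insert hi] using hf.1.add (ih hf.2)

end Regulous

/-- **Regulous functions, Corollaire `cofkresthyp`**: every `k`-regulously closed subset
of `ℝⁿ`, i.e. every intersection of zero sets of an arbitrary family of `k`-regulous
functions, is the zero set of a single `k`-regulous function. -/
theorem regulous_closed_is_principal (n k : ℕ) (E : Set ((Fin n → ℝ) → ℝ))
    (hE : ∀ g ∈ E, IsRegulous n k g) :
    ∃ f : (Fin n → ℝ) → ℝ, IsRegulous n k f ∧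
      (⋂ g ∈ E, {x : Fin n → ℝ | g x = 0}) = {x : Fin n → ℝ | f x = 0} := by
  obtain ⟨F, hFE, hF, hcut⟩ := isFinitelyCutOn_zeroLocus hE ⊥
  lift F to Finset ((Fin n → ℝ) → ℝ) using hF
  refine ⟨fun x ↦ ∑ g ∈ F, g x ^ 2, .sum fun g hg ↦ (hE g (hFE hg)).pow 2, ?_⟩
  ext x
  have hsum : ∑ g ∈ F, g x ^ 2 = 0 ↔ ∀ g ∈ F, g x = 0 := by
    simp only [Finset.sum_eq_zero_iff_of_nonneg fun _ _ ↦ sq_nonneg _, sq_eq_zero_iff]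
  simp only [Set.mem_iInter, Set.mem_ofPred_eq, hsum]
  exact ⟨fun h g hg ↦ h g (hFE hg), hcut x (by simp)⟩
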